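/- arXiv:0902.3311 — 4 statements merged into one kernel-verified Lean document; each statement's English description precedes it below -/
import Mathlib

section
/- Let n ≥ 1 and V = ℝⁿ. A Borel set S ⊆ ℝⁿ is Haar-null if and only if S has Lebesgue measure zero. -/
open MeasureTheory

/-- A subset `S` of a topological real vector space is Haar-null (shy) if it is contained in a
Borel set `A` for which there is a compactly supported Borel probability measure `μ` with
`μ (x + A) = 0` for every `x`. -/
def IsHaarNull {V : Type*} [AddCommGroup V] [TopologicalSpace V] [MeasurableSpace V]
    (S : Set V) : Prop :=
  ∃ A : Set V, S ⊆ A ∧ MeasurableSet A ∧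
    ∃ μ : Measure V, IsProbabilityMeasure μ ∧
      (∃ K : Set V, IsCompact K ∧ μ Kᶜ = 0) ∧
      ∀ x : V, μ ((fun a => x + a) '' A) = 0

/-!
Apply Fubini to the set of pairs `(x, y)` with `-x + y ∈ A`: its section at `x` is the translate
`x + A`, and its section at `y` is the reflected translate `y - A`. If a nonzero measure kills every
translate of `A`, then for some `y` the invariant measure of `y - A` vanishes, and so does that of
`A`. Conversely, an invariant measure conditioned on a compact neighborhood of `0` kills every
translate of a null set.
-/

theorem measure_eq_zero_of_ae_measure_image_add_left_eq_zero {G : Type*} [AddGroup G]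
    [MeasurableSpace G] [MeasurableAdd₂ G] [MeasurableNeg G] (μ ν : Measure G) [SFinite μ]
    [μ.IsAddLeftInvariant] [SFinite ν] [NeZero ν] {A : Set G} (hA : MeasurableSet A)
    (hν : ∀ᵐ x ∂μ, ν ((fun a => x + a) '' A) = 0) : μ A = 0 := by
  have sections_left : ∀ᵐ x ∂μ, ∀ᵐ y ∂ν, -x + y ∉ A := by
    filter_upwards [hν] with x hx
    rw [Set.image_add_left] at hx
    exact measure_eq_zero_iff_ae_notMem.1 hx
  have sections_right : ∀ᵐ y ∂ν, ∀ᵐ x ∂μ, -x + y ∉ A := by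
    have hmeas : MeasurableSet {p : G × G | -p.1 + p.2 ∉ A} :=
      (measurable_fst.neg.add measurable_snd) hA.compl
    exact (Measure.ae_ae_comm hmeas).1 sections_left
  obtain ⟨y, hy⟩ := sections_right.exists
  have neg_translate_null : μ (-((fun x => x + y) ⁻¹' A)) = 0 :=
    measure_eq_zero_iff_ae_notMem.2 hy
  exact (measure_add_right_null μ y).1 ((measure_neg_null μ).1 neg_translate_null)

theorem exists_isProbabilityMeasure_absolutelyContinuous_isCompact {X : Type*} [TopologicalSpace X]
    [WeaklyLocallyCompactSpace X] [R1Space X] [Nonempty X] [MeasurableSpace X]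
    [OpensMeasurableSpace X] (μ : Measure X) [μ.IsOpenPosMeasure] [IsFiniteMeasureOnCompacts μ] :
    ∃ ν : Measure X, IsProbabilityMeasure ν ∧ ν ≪ μ ∧ ∃ K, IsCompact K ∧ ν Kᶜ = 0 := by
  obtain ⟨K, hK_nhds, hK_compact, hK_closed⟩ :=
    exists_mem_nhds_isCompact_isClosed (Classical.arbitrary X)
  exact ⟨ProbabilityTheory.cond μ K,
    ProbabilityTheory.cond_isProbabilityMeasure_of_finite
      (μ.measure_pos_of_mem_nhds hK_nhds).ne' hK_compact.measure_ne_top,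
    ProbabilityTheory.cond_absolutelyContinuous,
    K, hK_compact, ProbabilityTheory.ae_cond_mem hK_closed.measurableSet⟩

section AddCommGroup

variable {V : Type*} [AddCommGroup V] [TopologicalSpace V] [MeasurableSpace V] {S : Set V}

theorem IsHaarNull.measure_eq_zero [MeasurableAdd₂ V] [MeasurableNeg V] (hS : IsHaarNull S)
    (μ : Measure V) [SFinite μ] [μ.IsAddLeftInvariant] : μ S = 0 := by
  obtain ⟨A, hSA, hA, ν, _, -, hν⟩ := hS
  exact measure_mono_null hSA
    (measure_eq_zero_of_ae_measure_image_add_left_eq_zero μ ν hA (ae_of_all μ hν))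

variable [IsTopologicalAddGroup V] [WeaklyLocallyCompactSpace V] [BorelSpace V]

theorem isHaarNull_of_measure_eq_zero (μ : Measure V) [μ.IsAddHaarMeasure] (hS : μ S = 0) :
    IsHaarNull S := by
  obtain ⟨ν, hν_prob, hνμ, hν_supp⟩ :=
    exists_isProbabilityMeasure_absolutelyContinuous_isCompact μ
  refine ⟨toMeasurable μ S, subset_toMeasurable μ S, measurableSet_toMeasurable μ S,
    ν, hν_prob, hν_supp, fun x => hνμ ?_⟩
  rw [Set.image_add_left, measure_preimage_add, measure_toMeasurable, hS]

theorem isHaarNull_iff_volume_eq_zero_general [MeasurableAdd₂ V] (μ : Measure V) [SFinite μ]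
    [μ.IsAddHaarMeasure] : IsHaarNull S ↔ μ S = 0 :=
  ⟨fun hS => hS.measure_eq_zero μ, isHaarNull_of_measure_eq_zero μ⟩

end AddCommGroup

/-- In `ℝⁿ` (`n ≥ 1`), a Borel set is Haar-null if and only if it has Lebesgue measure zero. -/
theorem isHaarNull_iff_volume_eq_zero (n : ℕ) (hn : 1 ≤ n)
    (S : Set (Fin n → ℝ)) (hS : MeasurableSet S) :
    IsHaarNull S ↔ volume S = 0 :=
  isHaarNull_iff_volume_eq_zero_general volume
end

section
/- Let V be an infinite-dimensional real Banach space. Every compact subset of V is Haar-null. -/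
/-!
Let `S` be σ-compact. Then the set `C` of all real multiples of differences of elements of `S` is
σ-compact too. If `C` were the whole space, then by Baire some compact set would have nonempty
interior, so the space would be locally compact and hence finite-dimensional. A line spanned by a
vector `v ∉ C` meets every translate of `S` in at most one point, as two distinct points would
exhibit `v` as a multiple of a difference of elements of `S`. So Lebesgue measure on the segment
from `0` to `v` vanishes on every translate of `S`.
-/

open MeasureTheory

open scoped Pointwise

section SigmaCompact

variable {X Y Z : Type*} [TopologicalSpace X] [TopologicalSpace Y] [TopologicalSpace Z]

theorem isSigmaCompact_prod {s : Set X} {t : Set Y} (hs : IsSigmaCompact s)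
    (ht : IsSigmaCompact t) : IsSigmaCompact (s ×ˢ t) := by
  obtain ⟨K, hK, rfl⟩ := hs
  obtain ⟨L, hL, rfl⟩ := ht
  rw [Set.iUnion_prod_const]
  refine isSigmaCompact_iUnion _ fun m => ?_
  rw [Set.prod_iUnion]
  exact isSigmaCompact_iUnion_of_isCompact _ fun n => (hK m).prod (hL n)

theorem isSigmaCompact_image2 {f : X → Y → Z} (hf : Continuous f.uncurry) {s : Set X} {t : Set Y}
    (hs : IsSigmaCompact s) (ht : IsSigmaCompact t) : IsSigmaCompact (Set.image2 f s t) := by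
  rw [← Set.image_uncurry_prod]
  exact (isSigmaCompact_prod hs ht).image hf

theorem measurableSet_of_isSigmaCompact [T2Space X] [MeasurableSpace X] [OpensMeasurableSpace X]
    {s : Set X} (hs : IsSigmaCompact s) : MeasurableSet s := by
  obtain ⟨K, hK, rfl⟩ := hs
  exact .iUnion fun n => (hK n).measurableSet

@[to_additive]
theorem locallyCompactSpace_of_sigmaCompact_of_baire_of_group (G : Type*) [Group G]
    [TopologicalSpace G] [IsTopologicalGroup G] [SigmaCompactSpace G] [BaireSpace G] :
    LocallyCompactSpace G := by
  obtain ⟨n, x, hx⟩ := nonempty_interior_of_iUnion_of_closed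
    (fun n => isClosed_closure (s := compactCovering G n)) (iUnion_closure_compactCovering G)
  exact (isCompact_compactCovering G n).closure.locallyCompactSpace_of_mem_nhds_of_group
    (mem_interior_iff_mem_nhds.1 hx)

end SigmaCompact

theorem exists_notMem_univ_smul_sub (𝕜 : Type*) {V : Type*} [NontriviallyNormedField 𝕜]
    [CompleteSpace 𝕜] [SigmaCompactSpace 𝕜] [AddCommGroup V] [Module 𝕜 V] [TopologicalSpace V]
    [IsTopologicalAddGroup V] [ContinuousSMul 𝕜 V] [T2Space V] [BaireSpace V]
    (hV : ¬ FiniteDimensional 𝕜 V) {S : Set V} (hS : IsSigmaCompact S) :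
    ∃ v : V, v ∉ (Set.univ : Set 𝕜) • (S - S) := by
  by_contra! hcover
  have hC : IsSigmaCompact ((Set.univ : Set 𝕜) • (S - S)) :=
    isSigmaCompact_image2 continuous_smul isSigmaCompact_univ
      (isSigmaCompact_image2 continuous_sub hS hS)
  rw [Set.eq_univ_of_forall hcover, isSigmaCompact_univ_iff] at hC
  have := locallyCompactSpace_of_sigmaCompact_of_baire_of_addGroup V
  exact hV (.of_locallyCompactSpace 𝕜)

theorem subsingleton_setOf_add_smul_mem {𝕜 V : Type*} [DivisionRing 𝕜] [AddCommGroup V]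
    [Module 𝕜 V] {S : Set V} {v : V} (hv : v ∉ (Set.univ : Set 𝕜) • (S - S)) (x : V) :
    {t : 𝕜 | x + t • v ∈ S}.Subsingleton := by
  intro s hs t ht
  by_contra hst
  have hdiff : (s - t) • v = (x + s • v) - (x + t • v) := by
    rw [add_sub_add_left_eq_sub, sub_smul]
  refine hv ⟨(s - t)⁻¹, Set.mem_univ _, _, Set.sub_mem_sub hs ht, ?_⟩
  simp only [← hdiff, inv_smul_smul₀ (sub_ne_zero.2 hst)]

section HaarNull

variable {V : Type*} [AddCommGroup V] [Module ℝ V] [TopologicalSpace V] [IsTopologicalAddGroup V]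
  [ContinuousSMul ℝ V] [MeasurableSpace V] [BorelSpace V]

theorem isHaarNull_of_forall_volume_add_smul_mem_eq_zero {A : Set V} (hA : MeasurableSet A) (v : V)
    (hv : ∀ x : V, volume {t : ℝ | x + t • v ∈ A} = 0) : IsHaarNull A := by
  have hf : Continuous fun t : ℝ => t • v := by fun_prop
  let μ : Measure V := (volume.restrict (Set.Icc (0 : ℝ) 1)).map fun t => t • v
  have : IsProbabilityMeasure (volume.restrict (Set.Icc (0 : ℝ) 1)) := ⟨by simp⟩
  have hμ_prob : IsProbabilityMeasure μ := Measure.isProbabilityMeasure_map hf.aemeasurable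
  -- The segment itself need not be Borel when `V` is not Hausdorff.
  let K : Set V := closure ((fun t : ℝ => t • v) '' Set.Icc 0 1)
  have hK : IsCompact K := (isCompact_Icc.image hf).closure
  have hμK : ∀ᵐ y ∂μ, y ∈ K := by
    refine (ae_map_iff hf.aemeasurable isClosed_closure.measurableSet).2 ?_
    filter_upwards [ae_restrict_mem measurableSet_Icc] with t ht
    exact subset_closure ⟨t, ht, rfl⟩
  refine ⟨A, subset_rfl, hA, μ, hμ_prob, ⟨K, hK, hμK⟩, fun x => ?_⟩
  have hline : (fun t : ℝ => t • v) ⁻¹' ((fun a => x + a) '' A) = {t : ℝ | -x + t • v ∈ A} := by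
    rw [Set.image_add_left]
    rfl
  have hAx : MeasurableSet ((fun a => x + a) '' A) :=
    (Homeomorph.addLeft x).measurableEmbedding.measurableSet_image.2 hA
  rw [Measure.map_apply hf.measurable hAx, hline]
  exact Measure.absolutelyContinuous_of_le Measure.restrict_le_self (hv (-x))

theorem isHaarNull_of_isCompact_general [T2Space V] [BaireSpace V]
    (hV : ¬ FiniteDimensional ℝ V) {S : Set V} (hS : IsSigmaCompact S) : IsHaarNull S := by
  obtain ⟨v, hv⟩ := exists_notMem_univ_smul_sub ℝ hV hS
  exact isHaarNull_of_forall_volume_add_smul_mem_eq_zero (measurableSet_of_isSigmaCompact hS) v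
    fun x => (subsingleton_setOf_add_smul_mem hv x).measure_zero _

end HaarNull

/-- In an infinite-dimensional real Banach space, every compact set is Haar-null. -/
theorem isHaarNull_of_isCompact {V : Type*} [NormedAddCommGroup V] [NormedSpace ℝ V]
    [CompleteSpace V] [MeasurableSpace V] [BorelSpace V]
    (hV : ¬ FiniteDimensional ℝ V) (K : Set V) (hK : IsCompact K) :
    IsHaarNull K :=
  isHaarNull_of_isCompact_general hV hK.isSigmaCompact
end

section
/- Let d ≥ 1, 0 < p₀ < ∞ and s₀ with s₀ − d/p₀ > 0. For every sequence c define the scaling function s_c(p) = sup{ s ∈ ℝ : c ∈ b^{s,∞}_p } for 0 < p < ∞. Then the set of c ∈ b^{s₀,∞}_{p₀} for which the identity « s_c(p) = s₀ for all 0 < p ≤ p₀ and s_c(p) = d/p + s₀ − d/p₀ for all p ≥ p₀ » fails is a Haar-null subset of b^{s₀,∞}_{p₀}. -/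
/-!
For `p, q > 0`, Hölder's inequality and the inclusion of `ℓ^p` in `ℓ^q` at each level `j` embed
`b^{s,∞}_p` into `b^{t,∞}_q` for `t = min (s, s - d/p + d/q)`; this gives the lower bound on the
scaling function for every `c ∈ b^{s₀,∞}_{p₀}`. As `t` is continuous in `q`, a `c` that exceeds this
bound at some `p` also exceeds it at a rational `q` with a rational smoothness `σ`, so countably
many subspaces `b^{σ,∞}_q` cover the exceptional set.

All these subspaces miss one single element `g` of `b^{s₀,∞}_{p₀}`: at even levels all coefficients
of `g` are equal, which is worst for `p ≤ p₀`, and at odd levels only one is nonzero, which is worst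
for `p ≥ p₀`. A translate of a linear subspace that does not contain `g` meets the line `ℝ g` in at
most one point, so Lebesgue measure on the segment `[0,1] g` is transverse to the exceptional set.
-/

open MeasureTheory
open scoped ENNReal BigOperators

/-- The space of wavelet-type coefficient sequences `c = (c_{j,k})`, `j ∈ ℕ`,
`k ∈ {0,…,2^j−1}^d`. -/
abbrev BSeq (d : ℕ) := (j : ℕ) → (Fin d → Fin (2 ^ j)) → ℝ

/-- The `j`-th term `2^{(s−d/r+d/2)j} (Σ_k |c_{j,k}|^r)^{1/r}` of the Besov quasi-norm. -/
noncomputable def besovNormAt (d : ℕ) (s r : ℝ) (c : BSeq d) (j : ℕ) : ℝ :=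
  (2 : ℝ) ^ ((s - (d : ℝ) / r + (d : ℝ) / 2) * (j : ℝ)) *
    (∑ k : Fin d → Fin (2 ^ j), |c j k| ^ r) ^ (1 / r)

/-- Membership in the Besov sequence space `b^{s,∞}_r`:
`sup_j 2^{(s−d/r+d/2)j} (Σ_k |c_{j,k}|^r)^{1/r} < ∞`. -/
def MemBesov (d : ℕ) (s r : ℝ) (c : BSeq d) : Prop :=
  ∃ C : ℝ, ∀ j : ℕ, besovNormAt d s r c j ≤ C

/-- The weak Besov quasi-norm
`‖c‖_{W(w,p)} = sup_{λ>0} λ^w Σ_{j≥0} 2^{j(dp/2−d)} #{k : |c_{j,k}| > λ}`, valued in `[0,∞]`. -/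
noncomputable def wBesovNorm (d : ℕ) (w p : ℝ) (c : BSeq d) : ℝ≥0∞ :=
  ⨆ lam : Set.Ioi (0 : ℝ),
    ENNReal.ofReal ((lam : ℝ) ^ w) *
      ∑' j : ℕ, ENNReal.ofReal ((2 : ℝ) ^ (((d : ℝ) * p / 2 - (d : ℝ)) * (j : ℝ))) *
        (Nat.card {k : Fin d → Fin (2 ^ j) // (lam : ℝ) < |c j k|} : ℝ≥0∞)

/-- Membership in the weak Besov sequence space `W(w,p)`. -/
def MemWBesov (d : ℕ) (w p : ℝ) (c : BSeq d) : Prop :=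
  wBesovNorm d w p c ≠ ⊤

/-- The Besov sequence space `b^{s,∞}_r` as a type. -/
def BesovSp (d : ℕ) (s r : ℝ) := {c : BSeq d // MemBesov d s r c}

/-- The extended distance on sequences associated with the Besov quasi-norm. -/
noncomputable def besovEDist (d : ℕ) (s r : ℝ) (c c' : BSeq d) : ℝ≥0∞ :=
  ⨆ j : ℕ, ENNReal.ofReal (besovNormAt d s r (c - c') j)

/-- A set `S ⊆ b^{s,∞}_r` is Haar-null (relative to a topology `τ` on `b^{s,∞}_r`) if it is
contained in a Borel set `A` carrying a compactly supported Borel probability measure `μ`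
all of whose translates of `A` are null. -/
def IsHaarNullBesov (d : ℕ) (s r : ℝ) (τ : TopologicalSpace (BesovSp d s r))
    (S : Set (BesovSp d s r)) : Prop :=
  ∃ A : Set (BesovSp d s r), S ⊆ A ∧ MeasurableSet[@borel _ τ] A ∧
    ∃ μ : @Measure (BesovSp d s r) (@borel _ τ),
      @IsProbabilityMeasure _ (@borel _ τ) μ ∧
      (∃ K : Set (BesovSp d s r), @IsCompact _ τ K ∧ μ Kᶜ = 0) ∧
      ∀ x : BesovSp d s r, μ {y : BesovSp d s r | ∃ a ∈ A, y.1 = x.1 + a.1} = 0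

/-- `τ` is the quasi-norm topology of `b^{s,∞}_r`: around every point, the balls of
`besovEDist` form a basis of neighbourhoods. -/
def IsBesovTopology (d : ℕ) (s r : ℝ) (τ : TopologicalSpace (BesovSp d s r)) : Prop :=
  ∀ x : BesovSp d s r, (@nhds _ τ x).HasBasis (fun ε : ℝ≥0∞ => 0 < ε)
    (fun ε => {y : BesovSp d s r | besovEDist d s r x.1 y.1 < ε})

/-- The minimax exponent `α̃`. -/
noncomputable def alphaTilde (d : ℕ) (s r p : ℝ) : ℝ :=
  if p * (d : ℝ) / (2 * s + (d : ℝ)) < r then 2 * s / (2 * s + (d : ℝ))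
  else 2 * (s - (d : ℝ) / r + (d : ℝ) / p) / (2 * (s - (d : ℝ) / r) + (d : ℝ))

/-- The irreducibility index `J(j,k)`: the smallest `J` such that `k = 2^{j−J} K` for some
`K ∈ {0,…,2^J−1}^d`, i.e. the smallest `J` with `2^{j−J} ∣ k_i` for all `i`. -/
def irredIndex (d : ℕ) (j : ℕ) (k : Fin d → Fin (2 ^ j)) : ℕ :=
  Nat.find (p := fun J : ℕ => ∀ i : Fin d, 2 ^ (j - J) ∣ (k i : ℕ)) ⟨j, fun i => by simp⟩

/-- The saturating sequence `g`, with `g_{j,k} = j^{−(1+3/r)} 2^{−(s−d/r+d/2)j} 2^{−(d/r)J(j,k)}`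
for `j ≥ 1` and `g_{0,k} = 0`. -/
noncomputable def gSeq (d : ℕ) (s r : ℝ) : BSeq d := fun j k =>
  if j = 0 then 0
  else (j : ℝ) ^ (-(1 + 3 / r)) * (2 : ℝ) ^ (-(s - (d : ℝ) / r + (d : ℝ) / 2) * (j : ℝ)) *
    (2 : ℝ) ^ (-((d : ℝ) / r) * (irredIndex d j k : ℝ))

/-! ### Counting-measure `L^p` norms -/

section Count

variable {α E : Type*} [MeasurableSpace α]

lemma eLpNorm_count_anti [MeasurableSingletonClass α] [TopologicalSpace E] [ContinuousENorm E]
    (f : α → E) {p q : ℝ≥0∞} (hp : p ≠ 0) (hpq : p ≤ q) :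
    eLpNorm f q Measure.count ≤ eLpNorm f p Measure.count := by
  rcases eq_or_ne q ⊤ with rfl | hq_top
  · rw [eLpNorm_exponent_top, eLpNormEssSup_count]
    exact iSup_le fun i => enorm_le_eLpNorm_count f i hp
  have hp_top : p ≠ ⊤ := ne_top_of_le_ne_top hq_top hpq
  have hq : q ≠ 0 := fun hq => hp (le_zero_iff.1 (hq ▸ hpq))
  set M := eLpNorm f p Measure.count with hM
  rcases eq_or_ne M ⊤ with hM_top | hM_top
  · exact hM_top ▸ le_top
  have hp_pos := ENNReal.toReal_pos hp hp_top
  have hq_pos := ENNReal.toReal_pos hq hq_top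
  have hqp : 0 ≤ q.toReal - p.toReal := sub_nonneg.2 (ENNReal.toReal_mono hq_top hpq)
  have rpow_split (x : ℝ≥0∞) : x ^ q.toReal = x ^ p.toReal * x ^ (q.toReal - p.toReal) := by
    rw [← ENNReal.rpow_add_of_nonneg _ _ hp_pos.le hqp, add_sub_cancel]
  have lintegral_eq : ∫⁻ i, ‖f i‖ₑ ^ p.toReal ∂Measure.count = M ^ p.toReal := by
    rw [hM, eLpNorm_eq_lintegral_rpow_enorm_toReal hp hp_top, ← ENNReal.rpow_mul,
      one_div_mul_cancel hp_pos.ne', ENNReal.rpow_one]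
  rw [eLpNorm_eq_lintegral_rpow_enorm_toReal hq hq_top, one_div,
    ENNReal.rpow_inv_le_iff hq_pos]
  calc ∫⁻ i, ‖f i‖ₑ ^ q.toReal ∂Measure.count
      ≤ ∫⁻ i, ‖f i‖ₑ ^ p.toReal * M ^ (q.toReal - p.toReal) ∂Measure.count := by
        refine lintegral_mono fun i => ?_
        rw [rpow_split]
        gcongr
        exact enorm_le_eLpNorm_count f i hp
    _ = M ^ q.toReal := by
        rw [lintegral_mul_const' _ _ (ENNReal.rpow_ne_top_of_nonneg hqp hM_top), lintegral_eq,
          ← rpow_split]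

variable [MeasurableSingletonClass α] [Finite α] [NormedAddCommGroup E]

lemma lpNorm_count_anti (f : α → E) {p q : ℝ≥0∞} (hp : p ≠ 0) (hpq : p ≤ q) :
    lpNorm f q Measure.count ≤ lpNorm f p Measure.count := by
  have hf (r : ℝ≥0∞) : MemLp f r Measure.count := .of_discrete
  rw [← toReal_eLpNorm (hf q).1, ← toReal_eLpNorm (hf p).1]
  exact ENNReal.toReal_mono (hf p).eLpNorm_ne_top (eLpNorm_count_anti f hp hpq)

lemma norm_le_lpNorm_count (f : α → E) {p : ℝ≥0∞} (hp : p ≠ 0) (i : α) :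
    ‖f i‖ ≤ lpNorm f p Measure.count := by
  have hf : MemLp f p Measure.count := .of_discrete
  rw [← toReal_eLpNorm hf.1, ← toReal_enorm]
  exact ENNReal.toReal_mono hf.eLpNorm_ne_top (enorm_le_eLpNorm_count f i hp)

lemma lpNorm_count_le_mul_card_rpow (f : α → E) {p q : ℝ≥0∞} (hp : p ≠ 0) (hpq : p ≤ q) :
    lpNorm f p Measure.count ≤
      lpNorm f q Measure.count * (Nat.card α : ℝ) ^ (1 / p.toReal - 1 / q.toReal) := by
  have hf (r : ℝ≥0∞) : MemLp f r Measure.count := .of_discrete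
  have hexp : 0 ≤ 1 / p.toReal - 1 / q.toReal := by
    rw [one_div, one_div, ← ENNReal.toReal_inv, ← ENNReal.toReal_inv, sub_nonneg]
    exact ENNReal.toReal_mono (ENNReal.inv_ne_top.2 hp) (ENNReal.inv_le_inv.2 hpq)
  rw [← toReal_eLpNorm (hf q).1, ← toReal_eLpNorm (hf p).1, ← Measure.count_real_univ,
    Measure.real, ENNReal.toReal_rpow, ← ENNReal.toReal_mul]
  exact ENNReal.toReal_mono
    (ENNReal.mul_ne_top (hf q).eLpNorm_ne_top
      (ENNReal.rpow_ne_top_of_nonneg hexp (measure_ne_top _ _)))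
    (eLpNorm_le_eLpNorm_mul_rpow_measure_univ hpq (hf p).1)

end Count

lemma lpNorm_add_le_mul {α E : Type*} [MeasurableSpace α] {μ : Measure α} [NormedAddCommGroup E]
    {f g : α → E} {p : ℝ≥0∞} (hf : MemLp f p μ) (hg : MemLp g p μ) :
    lpNorm (f + g) p μ ≤ (ENNReal.LpAddConst p).toReal * (lpNorm f p μ + lpNorm g p μ) := by
  rw [← toReal_eLpNorm hf.1, ← toReal_eLpNorm hg.1, ← toReal_eLpNorm (hf.1.add hg.1),
    ← ENNReal.toReal_add hf.eLpNorm_ne_top hg.eLpNorm_ne_top, ← ENNReal.toReal_mul]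
  exact ENNReal.toReal_mono
    (ENNReal.mul_ne_top (ENNReal.LpAddConst_lt_top p).ne (ENNReal.add_ne_top.2 ⟨hf.2.ne, hg.2.ne⟩))
    (eLpNorm_add_le' hf.1 hg.1 p)

/-! ### Besov norms at a fixed level -/

section Level

variable {d : ℕ} {s r p q : ℝ}

lemma natCard_level (d j : ℕ) : (Nat.card (Fin d → Fin (2 ^ j)) : ℝ) = 2 ^ ((d : ℝ) * j) := by
  rw [Nat.card_eq_fintype_card, Fintype.card_fun, Fintype.card_fin, Fintype.card_fin, mul_comm,
    Real.rpow_mul two_pos.le, Real.rpow_natCast, Real.rpow_natCast]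
  push_cast
  rfl

lemma besovNormAt_eq_mul_lpNorm (hr : 0 < r) (s : ℝ) (c : BSeq d) (j : ℕ) :
    besovNormAt d s r c j =
      2 ^ ((s - d / r + d / 2) * j) * lpNorm (c j) (ENNReal.ofReal r) Measure.count := by
  rw [besovNormAt, lpNorm_eq_integral_norm_rpow_toReal (by simpa) ENNReal.ofReal_ne_top
    (MemLp.of_discrete (p := 0)).1]
  simp [integral_count, hr.le]

lemma besovNormAt_smul (hr : 0 < r) (t : ℝ) (c : BSeq d) (j : ℕ) :
    besovNormAt d s r (t • c) j = |t| * besovNormAt d s r c j := by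
  rw [besovNormAt_eq_mul_lpNorm hr, besovNormAt_eq_mul_lpNorm hr, Pi.smul_apply,
    lpNorm_const_smul, coe_nnnorm, Real.norm_eq_abs, mul_left_comm]

lemma besovNormAt_add_le (hr : 0 < r) (a b : BSeq d) (j : ℕ) :
    besovNormAt d s r (a + b) j ≤ (ENNReal.LpAddConst (ENNReal.ofReal r)).toReal *
      (besovNormAt d s r a j + besovNormAt d s r b j) := by
  simp only [besovNormAt_eq_mul_lpNorm hr]
  rw [← mul_add, mul_left_comm]
  gcongr
  exact lpNorm_add_le_mul .of_discrete .of_discrete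

lemma rpow_mul_abs_le_besovNormAt (hr : 0 < r) (c : BSeq d) (j : ℕ) (k : Fin d → Fin (2 ^ j)) :
    2 ^ ((s - d / r + d / 2) * j) * |c j k| ≤ besovNormAt d s r c j := by
  rw [besovNormAt_eq_mul_lpNorm hr]
  gcongr
  exact norm_le_lpNorm_count (c j) (by simpa) k

lemma besovNormAt_mono (hr : 0 < r) {s t : ℝ} (hst : s ≤ t) (c : BSeq d) (j : ℕ) :
    besovNormAt d s r c j ≤ besovNormAt d t r c j := by
  rw [besovNormAt_eq_mul_lpNorm hr, besovNormAt_eq_mul_lpNorm hr]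
  gcongr
  · exact lpNorm_nonneg
  · exact one_le_two

lemma besovNormAt_le_of_exponent_le (hp : 0 < p) (hpq : p ≤ q) (c : BSeq d) (j : ℕ) :
    besovNormAt d s p c j ≤ besovNormAt d s q c j := by
  have hq : 0 < q := hp.trans_le hpq
  have holder := lpNorm_count_le_mul_card_rpow (c j) (by simpa) (ENNReal.ofReal_le_ofReal hpq)
  rw [natCard_level, ENNReal.toReal_ofReal hp.le, ENNReal.toReal_ofReal hq.le] at holder
  rw [besovNormAt_eq_mul_lpNorm hp, besovNormAt_eq_mul_lpNorm hq]
  calc _ ≤ _ := mul_le_mul_of_nonneg_left holder (by positivity)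
    _ = _ := by
      rw [mul_left_comm, mul_comm, ← Real.rpow_mul two_pos.le, ← Real.rpow_add two_pos]
      ring_nf

lemma besovNormAt_le_of_exponent_ge (hp : 0 < p) (hpq : p ≤ q) (c : BSeq d) (j : ℕ) :
    besovNormAt d (d / q + s - d / p) q c j ≤ besovNormAt d s p c j := by
  rw [besovNormAt_eq_mul_lpNorm hp, besovNormAt_eq_mul_lpNorm (hp.trans_le hpq),
    show (d : ℝ) / q + s - d / p - d / q = s - d / p by ring]
  gcongr
  exact lpNorm_count_anti (c j) (by simpa) (ENNReal.ofReal_le_ofReal hpq)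

end Level

/-! ### Linear structure and embeddings -/

section Embedding

variable {d : ℕ} {s t r p q : ℝ} {c : BSeq d}

lemma MemBesov.smul (hr : 0 < r) (hc : MemBesov d s r c) (t : ℝ) : MemBesov d s r (t • c) := by
  obtain ⟨C, hC⟩ := hc
  refine ⟨|t| * C, fun j => ?_⟩
  rw [besovNormAt_smul hr]
  gcongr
  exact hC j

lemma MemBesov.add (hr : 0 < r) {a b : BSeq d} (ha : MemBesov d s r a) (hb : MemBesov d s r b) :
    MemBesov d s r (a + b) := by
  obtain ⟨A, hA⟩ := ha
  obtain ⟨B, hB⟩ := hb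
  refine ⟨(ENNReal.LpAddConst (ENNReal.ofReal r)).toReal * (A + B), fun j => ?_⟩
  refine (besovNormAt_add_le hr a b j).trans ?_
  gcongr
  exacts [hA j, hB j]

lemma memBesov_zero (d : ℕ) (s : ℝ) (hr : 0 < r) : MemBesov d s r 0 :=
  ⟨0, fun j => by simp [besovNormAt_eq_mul_lpNorm hr]⟩

/-- The Besov sequence space `b^{s,∞}_r` as a linear subspace of the space of all sequences. -/
def besovSubmodule (d : ℕ) (s : ℝ) (hr : 0 < r) : Submodule ℝ (BSeq d) where
  carrier := {c | MemBesov d s r c}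
  zero_mem' := memBesov_zero d s hr
  add_mem' := MemBesov.add hr
  smul_mem' t _ hc := hc.smul hr t

lemma measurableSet_besovSubmodule (d : ℕ) (s : ℝ) (hr : 0 < r) :
    MeasurableSet (besovSubmodule d s hr : Set (BSeq d)) := by
  have hmeas (j : ℕ) : Measurable fun c : BSeq d => besovNormAt d s r c j := by
    unfold besovNormAt
    fun_prop
  convert measurableSet_bddAbove_range hmeas with c
  simp [besovSubmodule, MemBesov, bddAbove_def]

lemma MemBesov.of_besovNormAt_le (hc : MemBesov d s p c)
    (h : ∀ j, besovNormAt d t q c j ≤ besovNormAt d s p c j) : MemBesov d t q c := by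
  obtain ⟨C, hC⟩ := hc
  exact ⟨C, fun j => (h j).trans (hC j)⟩

lemma MemBesov.anti (hr : 0 < r) (hc : MemBesov d t r c) (hst : s ≤ t) : MemBesov d s r c :=
  hc.of_besovNormAt_le (besovNormAt_mono hr hst c)

/-- The largest `t` for which `b^{s,∞}_r` is contained in `b^{t,∞}_p`, for `r, p > 0`: the spaces
`b^{t,∞}_p` cost no smoothness when `p` decreases, and `d/r - d/p` when `p` increases. -/
noncomputable def besovExponent (d : ℕ) (s r p : ℝ) : ℝ :=
  min s (d / p + s - d / r)

lemma besovExponent_of_le (hp : 0 < p) (hpr : p ≤ r) : besovExponent d s r p = s := by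
  have : (d : ℝ) / r ≤ d / p := by gcongr
  exact min_eq_left (by linarith)

lemma besovExponent_of_ge (hr : 0 < r) (hrp : r ≤ p) :
    besovExponent d s r p = d / p + s - d / r := by
  have : (d : ℝ) / p ≤ d / r := by gcongr
  exact min_eq_right (by linarith)

lemma besovExponent_self (d : ℕ) (s r : ℝ) : besovExponent d s r r = s := by
  simp [besovExponent]

lemma continuousAt_besovExponent (d : ℕ) (s r : ℝ) (hp : p ≠ 0) :
    ContinuousAt (besovExponent d s r) p := by
  unfold besovExponent
  fun_prop (disch := exact hp)

lemma MemBesov.embedding (hr : 0 < r) (hp : 0 < p) (hc : MemBesov d s r c) :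
    MemBesov d (besovExponent d s r p) p c := by
  rcases le_total p r with hpr | hrp
  · rw [besovExponent_of_le hp hpr]
    exact hc.of_besovNormAt_le (besovNormAt_le_of_exponent_le hp hpr c)
  · rw [besovExponent_of_ge hr hrp]
    exact hc.of_besovNormAt_le (besovNormAt_le_of_exponent_ge hr hrp c)

end Embedding

/-! ### The scaling function -/

section ScalingFunction

variable {d : ℕ} {s r p : ℝ} {c : BSeq d}

/-- The scaling function `s_c(p) = sup {s : c ∈ b^{s,∞}_p}`, valued in `[-∞,∞]`. -/
noncomputable def scalingFunction (d : ℕ) (c : BSeq d) (p : ℝ) : EReal :=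
  sSup {x : EReal | ∃ s : ℝ, x = (s : EReal) ∧ MemBesov d s p c}

lemma scalingFunction_eq_of_isGreatest (h : IsGreatest {s | MemBesov d s p c} r) :
    scalingFunction d c p = r := by
  refine IsGreatest.csSup_eq ⟨⟨r, rfl, h.1⟩, ?_⟩
  rintro _ ⟨s, rfl, hs⟩
  exact EReal.coe_le_coe_iff.2 (h.2 hs)

lemma exists_rat_memBesov_of_besovExponent_lt {t : ℝ} (hp : 0 < p) (hc : MemBesov d t p c)
    (ht : besovExponent d s r p < t) :
    ∃ q σ : ℚ, (0 : ℝ) < q ∧ besovExponent d s r q < σ ∧ MemBesov d σ q c := by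
  have hlt : ∀ᶠ q in nhds p, besovExponent d s r q < besovExponent d t p q := by
    refine (continuousAt_besovExponent d s r hp.ne').eventually_lt
      (continuousAt_besovExponent d t p hp.ne') ?_
    rwa [besovExponent_self]
  obtain ⟨_, ⟨q, rfl⟩, hq, hq_pos⟩ :=
    (Rat.denseRange_cast (𝕜 := ℝ)).inter_nhds_nonempty (hlt.and (eventually_gt_nhds hp))
  obtain ⟨σ, hσ, hσt⟩ := exists_rat_btwn hq
  exact ⟨q, σ, hq_pos, hσ, (hc.embedding hp hq_pos).anti hq_pos hσt.le⟩

lemma exists_rat_memBesov_of_scalingFunction_ne (hr : 0 < r) (hp : 0 < p) (hc : MemBesov d s r c)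
    (h : scalingFunction d c p ≠ besovExponent d s r p) :
    ∃ q σ : ℚ, (0 : ℝ) < q ∧ besovExponent d s r q < σ ∧ MemBesov d σ q c := by
  contrapose! h
  refine scalingFunction_eq_of_isGreatest ⟨hc.embedding hr hp, fun t ht => ?_⟩
  by_contra! hlt
  obtain ⟨q, σ, hq, hσ, hmem⟩ := exists_rat_memBesov_of_besovExponent_lt hp ht hlt
  exact h q σ hq hσ hmem

end ScalingFunction

/-! ### The saturating sequence -/

section Saturating

variable {d : ℕ} {p : ℝ} {j : ℕ}

/-- A sequence of `b^{s,∞}_r` with the smallest possible scaling function: the constant even levels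
saturate the exponents `p ≤ r`, and the odd levels, concentrated at `k = 0`, the exponents
`p ≥ r`. -/
noncomputable def saturating (d : ℕ) (s r : ℝ) : BSeq d := fun j =>
  if Even j then fun _ => 2 ^ (-(s + d / 2) * j)
  else Pi.single 0 (2 ^ (-(s - d / r + d / 2) * j))

lemma besovNormAt_saturating_of_even (s r t : ℝ) (hp : 0 < p) (hj : Even j) :
    besovNormAt d t p (saturating d s r) j = 2 ^ ((t - s) * j) := by
  rw [besovNormAt_eq_mul_lpNorm hp, saturating, if_pos hj,
    lpNorm_const' (by simpa) ENNReal.ofReal_ne_top, ENNReal.toReal_ofReal hp.le,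
    Measure.count_real_univ, natCard_level, Real.norm_of_nonneg (by positivity),
    ← Real.rpow_mul two_pos.le, ← Real.rpow_add two_pos, ← Real.rpow_add two_pos]
  ring_nf

lemma besovNormAt_saturating_of_odd (s r t : ℝ) (hp : 0 < p) (hj : Odd j) :
    besovNormAt d t p (saturating d s r) j = 2 ^ ((t - (d / p + s - d / r)) * j) := by
  rw [besovNormAt, saturating, if_neg (Nat.not_even_iff_odd.2 hj), Fintype.sum_eq_single 0,
    Pi.single_eq_same, abs_of_pos (by positivity), one_div,
    Real.rpow_rpow_inv (by positivity) hp.ne', ← Real.rpow_add two_pos]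
  · ring_nf
  · intro k hk
    rw [Pi.single_eq_of_ne hk, abs_zero, Real.zero_rpow hp.ne']

lemma nonpos_of_frequently_rpow_mul_le {a b C : ℝ} (hb : 1 < b)
    (h : ∃ᶠ j : ℕ in Filter.atTop, b ^ (a * j) ≤ C) : a ≤ 0 := by
  by_contra! ha
  have htendsto : Filter.Tendsto (fun j : ℕ => b ^ (a * j)) Filter.atTop Filter.atTop :=
    (tendsto_rpow_atTop_of_base_gt_one b hb).comp
      (tendsto_natCast_atTop_atTop.const_mul_atTop ha)
  exact h ((htendsto.eventually_gt_atTop C).mono fun j hj => hj.not_ge)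

lemma memBesov_saturating_iff (s r t : ℝ) (hp : 0 < p) :
    MemBesov d t p (saturating d s r) ↔ t ≤ besovExponent d s r p := by
  constructor
  · rintro ⟨C, hC⟩
    refine le_min (sub_nonpos.1 ?_) (sub_nonpos.1 ?_) <;>
      refine nonpos_of_frequently_rpow_mul_le (C := C) one_lt_two ?_
    · exact Nat.frequently_even.mono fun j hj =>
        besovNormAt_saturating_of_even s r t hp hj ▸ hC j
    · exact Nat.frequently_odd.mono fun j hj =>
        besovNormAt_saturating_of_odd s r t hp hj ▸ hC j
  · intro ht
    obtain ⟨hts, htr⟩ := le_min_iff.1 ht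
    refine ⟨1, fun j => ?_⟩
    rcases j.even_or_odd with hj | hj
    · rw [besovNormAt_saturating_of_even s r t hp hj]
      exact Real.rpow_le_one_of_one_le_of_nonpos one_le_two
        (mul_nonpos_of_nonpos_of_nonneg (sub_nonpos.2 hts) j.cast_nonneg)
    · rw [besovNormAt_saturating_of_odd s r t hp hj]
      exact Real.rpow_le_one_of_one_le_of_nonpos one_le_two
        (mul_nonpos_of_nonpos_of_nonneg (sub_nonpos.2 htr) j.cast_nonneg)

end Saturating

/-! ### The quasi-norm topology -/

section Topology

variable {d : ℕ} {s r : ℝ}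

lemma ofReal_rpow_mul_dist_le_besovEDist (hr : 0 < r) (a b : BSeq d) (j : ℕ)
    (k : Fin d → Fin (2 ^ j)) :
    ENNReal.ofReal (2 ^ ((s - d / r + d / 2) * j) * dist (a j k) (b j k)) ≤ besovEDist d s r a b :=
  (ENNReal.ofReal_le_ofReal (rpow_mul_abs_le_besovNormAt hr (a - b) j k)).trans
    (le_iSup (fun j => ENNReal.ofReal (besovNormAt d s r (a - b) j)) j)

lemma besovEDist_smul_smul (hr : 0 < r) (t u : ℝ) (c : BSeq d) :
    besovEDist d s r (t • c) (u • c) = ENNReal.ofReal |t - u| * besovEDist d s r c 0 := by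
  simp only [besovEDist, ← sub_smul, besovNormAt_smul hr, ENNReal.ofReal_mul (abs_nonneg _),
    ENNReal.mul_iSup, sub_zero]

lemma MemBesov.besovEDist_zero_ne_top {c : BSeq d} (hc : MemBesov d s r c) :
    besovEDist d s r c 0 ≠ ⊤ := by
  obtain ⟨C, hC⟩ := hc
  refine ne_top_of_le_ne_top (ENNReal.ofReal_ne_top (r := C)) (iSup_le fun j => ?_)
  rw [sub_zero]
  exact ENNReal.ofReal_le_ofReal (hC j)

variable [τ : TopologicalSpace (BesovSp d s r)]

lemma IsBesovTopology.continuous_val (hτ : IsBesovTopology d s r τ) (hr : 0 < r) :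
    Continuous fun c : BesovSp d s r => c.1 := by
  refine continuous_pi fun j => continuous_pi fun k => continuous_iff_continuousAt.2 fun x => ?_
  refine ((hτ x).tendsto_iff Metric.nhds_basis_ball).2 fun ε hε => ?_
  set w : ℝ := 2 ^ ((s - d / r + d / 2) * j)
  have hw : 0 < w := by positivity
  refine ⟨ENNReal.ofReal (w * ε), by positivity, fun y hy => ?_⟩
  have hlt := (ofReal_rpow_mul_dist_le_besovEDist hr x.1 y.1 j k).trans_lt hy
  rw [ENNReal.ofReal_lt_ofReal_iff (by positivity), mul_lt_mul_iff_right₀ hw] at hlt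
  rwa [Metric.mem_ball, dist_comm]

lemma IsBesovTopology.t2Space (hτ : IsBesovTopology d s r τ) (hr : 0 < r) :
    T2Space (BesovSp d s r) :=
  T2Space.of_injective_continuous (f := fun c : BesovSp d s r => c.1) Subtype.val_injective
    (hτ.continuous_val hr)

/-- Scalar multiplication on `b^{s,∞}_r`; a plain function, since an instance could not take the
argument `0 < r`. -/
def BesovSp.smul (hr : 0 < r) (t : ℝ) (c : BesovSp d s r) : BesovSp d s r :=
  ⟨t • c.1, c.2.smul hr t⟩

lemma IsBesovTopology.continuous_smul_const (hτ : IsBesovTopology d s r τ) (hr : 0 < r)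
    (c : BesovSp d s r) : Continuous fun t => BesovSp.smul hr t c := by
  refine continuous_iff_continuousAt.2 fun t => (hτ _).tendsto_right_iff.2 fun ε hε => ?_
  have hlim : Filter.Tendsto (fun u => ENNReal.ofReal |t - u| * besovEDist d s r c.1 0)
      (nhds t) (nhds 0) := by
    have habs : Continuous fun u => ENNReal.ofReal |t - u| :=
      ENNReal.continuous_ofReal.comp (by fun_prop)
    simpa using ENNReal.Tendsto.mul_const (habs.tendsto t) (Or.inr c.2.besovEDist_zero_ne_top)
  filter_upwards [hlim.eventually_lt_const hε] with u hu
  exact (besovEDist_smul_smul hr t u c.1).trans_lt hu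

end Topology

/-! ### Haar-null sets -/

lemma subsingleton_setOf_smul_sub_mem {K V : Type*} [DivisionRing K] [AddCommGroup V] [Module K V]
    (W : Submodule K V) {g : V} (hg : g ∉ W) (x : V) : {t : K | t • g - x ∈ W}.Subsingleton := by
  intro t ht u hu
  by_contra hne
  have hmem : (t - u) • g ∈ W := by
    simpa only [sub_sub_sub_cancel_right, ← sub_smul] using W.sub_mem ht hu
  exact hg ((W.smul_mem_iff (sub_ne_zero.2 hne)).1 hmem)

lemma map_restrict_compl_image_eq_zero {α β : Type*} [MeasurableSpace α] [MeasurableSpace β]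
    {μ : Measure α} {f : α → β} {s : Set α} (hf : Measurable f) (hs : MeasurableSet s)
    (hfs : MeasurableSet (f '' s)) : (μ.restrict s).map f (f '' s)ᶜ = 0 :=
  (ae_map_iff hf.aemeasurable hfs).2 (ae_restrict_of_forall_mem hs fun _ => Set.mem_image_of_mem f)

section HaarNull

variable {d : ℕ} {s r : ℝ} {τ : TopologicalSpace (BesovSp d s r)}

lemma IsHaarNullBesov.mono {S T : Set (BesovSp d s r)} (hT : IsHaarNullBesov d s r τ T)
    (hST : S ⊆ T) : IsHaarNullBesov d s r τ S := by
  obtain ⟨A, hTA, hA⟩ := hT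
  exact ⟨A, hST.trans hTA, hA⟩

lemma isHaarNullBesov_of_forall_exists_mem_submodule (hr : 0 < r) (hτ : IsBesovTopology d s r τ)
    {ι : Type*} [Countable ι] (W : ι → Submodule ℝ (BSeq d))
    (hW : ∀ i, MeasurableSet (W i : Set (BSeq d))) (g : BesovSp d s r) (hg : ∀ i, g.1 ∉ W i)
    {S : Set (BesovSp d s r)} (hS : ∀ c ∈ S, ∃ i, c.1 ∈ W i) :
    IsHaarNullBesov d s r τ S := by
  borelize (BesovSp d s r)
  have := hτ.t2Space hr
  have hline := hτ.continuous_smul_const hr g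
  have hval : Measurable fun c : BesovSp d s r => c.1 := (hτ.continuous_val hr).measurable
  have hsegment : IsCompact ((fun t => BesovSp.smul hr t g) '' Set.Icc 0 1) :=
    isCompact_Icc.image hline
  refine ⟨⋃ i, {c | c.1 ∈ W i}, fun c hc => Set.mem_iUnion.2 (hS c hc),
    .iUnion fun i => hval (hW i),
    (volume.restrict (Set.Icc 0 1)).map fun t => BesovSp.smul hr t g, ?_,
    ⟨_, hsegment, map_restrict_compl_image_eq_zero hline.measurable
      measurableSet_Icc hsegment.measurableSet⟩, fun x => ?_⟩
  · have : IsProbabilityMeasure ((volume : Measure ℝ).restrict (Set.Icc 0 1)) := ⟨by simp⟩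
    exact Measure.isProbabilityMeasure_map hline.aemeasurable
  · have htranslate : {y : BesovSp d s r | ∃ a ∈ ⋃ i, {c : BesovSp d s r | c.1 ∈ W i},
        y.1 = x.1 + a.1} ⊆ ⋃ i, {y | y.1 - x.1 ∈ W i} := by
      rintro y ⟨a, ha, hy⟩
      simpa [hy] using ha
    refine measure_mono_null htranslate (measure_iUnion_null fun i => ?_)
    have hmeas : MeasurableSet {y : BesovSp d s r | y.1 - x.1 ∈ W i} := hval.sub_const x.1 (hW i)
    refine (Measure.map_apply hline.measurable hmeas).trans ?_
    exact Measure.absolutelyContinuous_of_le Measure.restrict_le_self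
      ((subsingleton_setOf_smul_sub_mem (W i) (hg i) x.1).measure_zero _)

end HaarNull

theorem scalingFunction_generic_general (d : ℕ) (p0 s0 : ℝ) (hp0 : 0 < p0)
    (τ : TopologicalSpace (BesovSp d s0 p0)) (hτ : IsBesovTopology d s0 p0 τ) :
    IsHaarNullBesov d s0 p0 τ
      {c | ¬ ∀ p : ℝ, 0 < p → scalingFunction d c.1 p = besovExponent d s0 p0 p} := by
  have hsat : MemBesov d s0 p0 (saturating d s0 p0) :=
    (memBesov_saturating_iff s0 p0 s0 hp0).2 (besovExponent_self d s0 p0).ge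
  refine isHaarNullBesov_of_forall_exists_mem_submodule hp0 hτ
    (ι := {x : ℚ × ℚ // (0 : ℝ) < x.1 ∧ besovExponent d s0 p0 x.1 < x.2})
    (fun i => besovSubmodule d i.1.2 i.2.1) (fun i => measurableSet_besovSubmodule d _ i.2.1)
    ⟨saturating d s0 p0, hsat⟩ (fun i hi => ?_) fun c hc => ?_
  · exact i.2.2.not_ge ((memBesov_saturating_iff s0 p0 _ i.2.1).1 hi)
  · push Not at hc
    obtain ⟨p, hp, hne⟩ := hc
    obtain ⟨q, σ, hq, hσ, hmem⟩ := exists_rat_memBesov_of_scalingFunction_ne hp0 hp c.2 hne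
    exact ⟨⟨(q, σ), hq, hσ⟩, hmem⟩

/-- Generic validity of the scaling function (Fraysse): outside a Haar-null subset of
`b^{s₀,∞}_{p₀}` (with `s₀ − d/p₀ > 0`), the scaling function
`s_c(p) = sup{s : c ∈ b^{s,∞}_p}` equals `s₀` for `0 < p ≤ p₀` and `d/p + s₀ − d/p₀`
for `p ≥ p₀`. -/
theorem scalingFunction_generic (d : ℕ) (hd : 1 ≤ d) (p0 s0 : ℝ) (hp0 : 0 < p0)
    (hs0 : 0 < s0 - (d : ℝ) / p0)
    (τ : TopologicalSpace (BesovSp d s0 p0)) (hτ : IsBesovTopology d s0 p0 τ) :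
    IsHaarNullBesov d s0 p0 τ
      {c : BesovSp d s0 p0 |
        ¬ ((∀ p : ℝ, 0 < p → p ≤ p0 →
              sSup {x : EReal | ∃ s : ℝ, x = (s : EReal) ∧ MemBesov d s p c.1}
                = (s0 : EReal)) ∧
           (∀ p : ℝ, p0 ≤ p →
              sSup {x : EReal | ∃ s : ℝ, x = (s : EReal) ∧ MemBesov d s p c.1}
                = (((d : ℝ) / p + s0 - (d : ℝ) / p0 : ℝ) : EReal)))} :=
  (scalingFunction_generic_general d p0 s0 hp0 τ hτ).mono fun _ hc h => hc
    ⟨fun p hp hpp0 => (h p hp).trans (congrArg _ (besovExponent_of_le hp hpp0)),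
      fun p hpp0 => (h p (hp0.trans_le hpp0)).trans (congrArg _ (besovExponent_of_ge hp0 hpp0))⟩
end

section
/- Let d ≥ 1, 1 ≤ r < ∞ and s > d/r. The sequence g defined by g_{j,k} = j^{−a} 2^{−(s−d/r+d/2)j} 2^{−(d/r)J} (with a = 1 + 3/r and J the irreducibility index of (j,k)) belongs to the Besov sequence space b^{s,∞}_r, i.e. sup_{j≥1} 2^{(s−d/r+d/2)j} (Σ_k |g_{j,k}|^r)^{1/r} < ∞. -/
/-!
In the `j`-th term of the quasi-norm the factors `2^{±(s-d/r+d/2)j}` cancel, and what remains is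
`j^{-(1+3/r)} (∑_k 2^{-dJ(j,k)})^{1/r}`. For `J ≤ j` exactly `2^{dJ}` of the points `k/2^j` lie on
the coarser grid `2^{-J} ℤ^d`, so each of the `j + 1` possible values of the irreducibility index
contributes at most `1` to the sum. As `1 + 3/r ≥ 1/r`, the power `j^{-(1+3/r)}` absorbs the
resulting factor `(j + 1)^{1/r}` up to the constant `2^{1/r}`.
-/

open MeasureTheory
open scoped ENNReal BigOperators

open Finset

section Counting

lemma card_fin_filter_dvd {m n : ℕ} (hmn : m ∣ n) : #{x : Fin n | m ∣ (x : ℕ)} = n / m := by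
  rcases m.eq_zero_or_pos with rfl | hm
  · obtain rfl := zero_dvd_iff.mp hmn
    simp
  · calc #{x : Fin n | m ∣ (x : ℕ)} = n.count (· ≡ 0 [MOD m]) := by
          simp only [Nat.modEq_zero_iff_dvd, Nat.count_eq_card_filter_range,
            ← Nat.Iio_eq_range, ← Fin.map_valEmbedding_univ, filter_map, card_map,
            Function.comp_def, Fin.valEmbedding_apply]
      _ = n / m := by
          simp [Nat.count_modEq_card n hm, Nat.mod_eq_zero_of_dvd hmn]

lemma sum_inv_comp_le_card_of_card_fiber_le {ι κ K : Type*} [DecidableEq κ] [Semifield K]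
    [LinearOrder K] [IsStrictOrderedRing K] {s : Finset ι} {t : Finset κ} {f : ι → κ} {w : κ → K}
    (hf : ∀ i ∈ s, f i ∈ t) (hw : ∀ b ∈ t, (#{i ∈ s | f i = b} : K) ≤ w b) :
    ∑ i ∈ s, (w (f i))⁻¹ ≤ #t :=
  calc ∑ i ∈ s, (w (f i))⁻¹ = ∑ b ∈ t, #{i ∈ s | f i = b} / w b := by
        simp only [← sum_fiberwise_of_maps_to' hf fun b => (w b)⁻¹, sum_const, nsmul_eq_mul,
          div_eq_mul_inv]
    _ ≤ ∑ _b ∈ t, 1 :=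
        sum_le_sum fun b hb => div_le_one_of_le₀ (hw b hb) ((Nat.cast_nonneg _).trans (hw b hb))
    _ = #t := by simp

end Counting

section IrreducibilityIndex

variable {d j J : ℕ}

lemma irredIndex_le_iff {k : Fin d → Fin (2 ^ j)} :
    irredIndex d j k ≤ J ↔ ∀ i, 2 ^ (j - J) ∣ (k i : ℕ) := by
  rw [irredIndex, Nat.find_le_iff]
  exact ⟨fun ⟨m, hm, hk⟩ i => (pow_dvd_pow 2 (Nat.sub_le_sub_left hm j)).trans (hk i),
    fun hk => ⟨J, le_rfl, hk⟩⟩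

lemma irredIndex_le (k : Fin d → Fin (2 ^ j)) : irredIndex d j k ≤ j :=
  irredIndex_le_iff.mpr fun i => by simp

lemma card_irredIndex_le (hJ : J ≤ j) :
    #{k : Fin d → Fin (2 ^ j) | irredIndex d j k ≤ J} = (2 ^ J) ^ d :=
  calc #{k : Fin d → Fin (2 ^ j) | irredIndex d j k ≤ J}
      = #(Fintype.piFinset fun _ : Fin d => {x : Fin (2 ^ j) | 2 ^ (j - J) ∣ (x : ℕ)}) := by
        congr 1
        ext k
        simp [irredIndex_le_iff]
    _ = (2 ^ J) ^ d := by
        rw [Fintype.card_piFinset_const, card_fin_filter_dvd (pow_dvd_pow 2 (j.sub_le J)),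
          Nat.pow_div (j.sub_le J) two_pos, Nat.sub_sub_self hJ]

lemma sum_inv_two_pow_irredIndex_le (d j : ℕ) :
    ∑ k : Fin d → Fin (2 ^ j), (((2 : ℝ) ^ irredIndex d j k) ^ d)⁻¹ ≤ j + 1 := by
  have card_fiber_le : ∀ J ∈ range (j + 1),
      (#{k : Fin d → Fin (2 ^ j) | irredIndex d j k = J} : ℝ) ≤ ((2 : ℝ) ^ J) ^ d := by
    intro J hJ
    have hsub : #{k : Fin d → Fin (2 ^ j) | irredIndex d j k = J} ≤ (2 ^ J) ^ d :=
      (card_le_card <| monotone_filter_right _ fun _ _ h => h.le).trans_eq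
        (card_irredIndex_le (mem_range_succ_iff.mp hJ))
    exact_mod_cast hsub
  simpa using sum_inv_comp_le_card_of_card_fiber_le (w := fun J => ((2 : ℝ) ^ J) ^ d)
    (fun k _ => mem_range_succ_iff.mpr (irredIndex_le k)) card_fiber_le

end IrreducibilityIndex

section RealPowers

lemma rpow_neg_div_mul_natCast_rpow {x r : ℝ} (hx : 0 ≤ x) (hr : r ≠ 0) (d n : ℕ) :
    (x ^ (-((d : ℝ) / r) * (n : ℝ))) ^ r = ((x ^ n) ^ d)⁻¹ := by
  have hexp : -((d : ℝ) / r) * n * r = -((n * d : ℕ) : ℝ) := by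
    push_cast
    field_simp
  rw [← Real.rpow_mul hx, hexp, Real.rpow_neg hx, Real.rpow_natCast, pow_mul]

lemma rpow_neg_mul_add_one_rpow_le {x a b : ℝ} (hx : 1 ≤ x) (hb : 0 ≤ b) (hba : b ≤ a) :
    x ^ (-a) * (x + 1) ^ b ≤ 2 ^ b := by
  have hx₀ : 0 < x := zero_lt_one.trans_le hx
  calc x ^ (-a) * (x + 1) ^ b ≤ x ^ (-b) * (2 * x) ^ b := by
        gcongr
        linarith
    _ = 2 ^ b := by
        rw [Real.mul_rpow two_pos.le hx₀.le, mul_left_comm, ← Real.rpow_add hx₀,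
          neg_add_cancel, Real.rpow_zero, mul_one]

end RealPowers

section Besov

variable {d j : ℕ} {s r : ℝ}

lemma besovNormAt_of_eq_mul {c : BSeq d} {a : ℝ} {u : (Fin d → Fin (2 ^ j)) → ℝ} (hr : r ≠ 0)
    (hc : ∀ k, c j k = a * (2 : ℝ) ^ (-(s - (d : ℝ) / r + (d : ℝ) / 2) * (j : ℝ)) * u k) :
    besovNormAt d s r c j = |a| * (∑ k, |u k| ^ r) ^ (1 / r) := by
  set e := s - (d : ℝ) / r + (d : ℝ) / 2
  have abs_rpow : ∀ k, |c j k| ^ r = (|a| * (2 : ℝ) ^ (-e * j)) ^ r * |u k| ^ r := fun k => by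
    rw [hc, abs_mul, abs_mul, abs_of_pos (Real.rpow_pos_of_pos two_pos _),
      Real.mul_rpow (by positivity) (abs_nonneg _)]
  have cancel : (2 : ℝ) ^ (e * j) * (2 : ℝ) ^ (-e * j) = 1 := by
    rw [neg_mul, Real.rpow_neg two_pos.le, mul_inv_cancel₀ (by positivity)]
  calc besovNormAt d s r c j
      = (2 : ℝ) ^ (e * j) * (|a| * (2 : ℝ) ^ (-e * j) * (∑ k, |u k| ^ r) ^ (1 / r)) := by
        rw [besovNormAt, sum_congr rfl fun k _ => abs_rpow k, ← mul_sum,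
          Real.mul_rpow (by positivity) (by positivity), one_div,
          Real.rpow_rpow_inv (by positivity) hr]
    _ = (2 : ℝ) ^ (e * j) * (2 : ℝ) ^ (-e * j) * (|a| * (∑ k, |u k| ^ r) ^ (1 / r)) := by ring
    _ = |a| * (∑ k, |u k| ^ r) ^ (1 / r) := by rw [cancel, one_mul]

lemma besovNormAt_gSeq_zero (hr : r ≠ 0) : besovNormAt d s r (gSeq d s r) 0 = 0 := by
  simp [besovNormAt, gSeq, hr]

lemma besovNormAt_gSeq (hr : r ≠ 0) (hj : j ≠ 0) :
    besovNormAt d s r (gSeq d s r) j = (j : ℝ) ^ (-(1 + 3 / r)) *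
      (∑ k : Fin d → Fin (2 ^ j), (((2 : ℝ) ^ irredIndex d j k) ^ d)⁻¹) ^ (1 / r) := by
  rw [besovNormAt_of_eq_mul hr fun k => if_neg hj]
  simp only [abs_of_nonneg (Real.rpow_nonneg (Nat.cast_nonneg j) _),
    abs_of_pos (Real.rpow_pos_of_pos two_pos _), rpow_neg_div_mul_natCast_rpow two_pos.le hr]

theorem besovNormAt_gSeq_le (d j : ℕ) (s : ℝ) (hr : 0 < r) :
    besovNormAt d s r (gSeq d s r) j ≤ 2 ^ (1 / r) := by
  rcases eq_or_ne j 0 with rfl | hj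
  · rw [besovNormAt_gSeq_zero hr.ne']
    positivity
  have exponent_le : 1 / r ≤ 1 + 3 / r := by
    have : 1 / r ≤ 3 / r := by gcongr; norm_num
    linarith
  calc besovNormAt d s r (gSeq d s r) j
      ≤ (j : ℝ) ^ (-(1 + 3 / r)) * ((j : ℝ) + 1) ^ (1 / r) := by
        rw [besovNormAt_gSeq hr.ne' hj]
        gcongr
        exact sum_inv_two_pow_irredIndex_le d j
    _ ≤ 2 ^ (1 / r) :=
        rpow_neg_mul_add_one_rpow_le (Nat.one_le_cast.mpr (Nat.one_le_iff_ne_zero.mpr hj))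
          (by positivity) exponent_le

theorem gSeq_memBesov_general (d : ℕ) (s : ℝ) (hr : 0 < r) : MemBesov d s r (gSeq d s r) :=
  ⟨2 ^ (1 / r), fun j => besovNormAt_gSeq_le d j s hr⟩

end Besov

/-- The saturating sequence `g` belongs to `b^{s,∞}_r`. -/
theorem gSeq_memBesov (d : ℕ) (hd : 1 ≤ d) (r s : ℝ) (hr : 1 ≤ r) (hs : (d : ℝ) / r < s) :
    MemBesov d s r (gSeq d s r) :=
  gSeq_memBesov_general d s (by linarith)
end
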